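/- arXiv:math-ph/0105040 — 8 statements merged into one kernel-verified Lean document; each statement's English description precedes it below -/
import Mathlib

section
/- Unitarity of the SU(2)-invariant Thirring model S-matrix: for every β ∈ ℂ with β ∉ πi·ℤ, one has S(β)·S(−β) = id as endomorphisms of ℂ² ⊗ ℂ² (equivalently, as 4×4 complex matrices indexed by (Fin 2) × (Fin 2)). -/
open scoped Matrix

/-- The scalar factor `S₀(β)` of the SU(2) ITM S-matrix. -/
noncomputable def S0 (β : ℂ) : ℂ :=
  Complex.Gamma (1/2 + β / (2 * Real.pi * Complex.I)) *
    Complex.Gamma (-β / (2 * Real.pi * Complex.I)) /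
  (Complex.Gamma (1/2 - β / (2 * Real.pi * Complex.I)) *
    Complex.Gamma (β / (2 * Real.pi * Complex.I)))

/-- The permutation operator `P` on `ℂ² ⊗ ℂ²`, with entries
`P_{(i,j),(k,l)} = δ_{i,l}·δ_{j,k}`. -/
def Pmat : Matrix (Fin 2 × Fin 2) (Fin 2 × Fin 2) ℂ :=
  fun p q => if p.1 = q.2 ∧ p.2 = q.1 then 1 else 0

/-- The S-matrix `S(β) = S₀(β)·(β·id − πi·P)/(β − πi)` of the SU(2)-invariant
Thirring model. -/
noncomputable def Smat (β : ℂ) : Matrix (Fin 2 × Fin 2) (Fin 2 × Fin 2) ℂ :=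
  (S0 β * (β - Real.pi * Complex.I)⁻¹) •
    (β • (1 : Matrix (Fin 2 × Fin 2) (Fin 2 × Fin 2) ℂ) -
      (Real.pi * Complex.I) • Pmat)

theorem Pmat_sq : Pmat * Pmat = 1 := by
  ext ⟨i, j⟩ ⟨k, l⟩
  fin_cases i <;> fin_cases j <;> fin_cases k <;> fin_cases l <;>
    simp [Pmat, Matrix.mul_apply, Fintype.sum_prod_type, Matrix.one_apply]

theorem S0_mul (β : ℂ) (hβ : ∀ k : ℤ, β ≠ (k : ℂ) * (Real.pi * Complex.I)) :
    S0 β * S0 (-β) = 1 := by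
  have hpi : (Real.pi : ℂ) ≠ 0 := by exact_mod_cast Real.pi_ne_zero
  have hI := Complex.I_ne_zero
  have h0 : (2 * Real.pi * Complex.I : ℂ) ≠ 0 := by simp [hpi]
  have key : ∀ z : ℂ, β = z * (2 * Real.pi * Complex.I) → ∀ k : ℤ, 2 * z ≠ k := by
    intro z hz k hk
    apply hβ k
    rw [hz, ← hk]; ring
  unfold S0
  rw [neg_neg, neg_div]
  have hz := key (β / (2 * Real.pi * Complex.I)) (by field_simp)
  generalize β / (2 * Real.pi * Complex.I) = z at hz
  have h1 : Complex.Gamma z ≠ 0 := Complex.Gamma_ne_zero fun m h =>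
    hz (-2 * m) (by rw [h]; push_cast; ring)
  have h2 : Complex.Gamma (-z) ≠ 0 := Complex.Gamma_ne_zero fun m h =>
    hz (2 * m) (by push_cast; linear_combination (-2) * h)
  have h3 : Complex.Gamma (1/2 + z) ≠ 0 := Complex.Gamma_ne_zero fun m h =>
    hz (-2 * m - 1) (by push_cast; linear_combination 2 * h)
  have h4 : Complex.Gamma (1/2 - z) ≠ 0 := Complex.Gamma_ne_zero fun m h =>
    hz (2 * m + 1) (by push_cast; linear_combination (-2) * h)
  rw [sub_neg_eq_add, ← sub_eq_add_neg, div_mul_div_comm, div_eq_one_iff_eq]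
  · ring
  · exact mul_ne_zero (mul_ne_zero h4 h1) (mul_ne_zero h3 h2)

/-- Unitarity of the SU(2) ITM S-matrix: `S(β)·S(−β) = 1` for `β ∉ πi·ℤ`. -/
theorem Smat_unitarity (β : ℂ) (hβ : ∀ k : ℤ, β ≠ (k : ℂ) * (Real.pi * Complex.I)) :
    Smat β * Smat (-β) = 1 := by
  have hS := S0_mul β hβ
  have ha : β - Real.pi * Complex.I ≠ 0 := fun h => hβ 1 (by push_cast; linear_combination h)
  have hb : -β - Real.pi * Complex.I ≠ 0 := fun h =>
    hβ (-1) (by push_cast; linear_combination -h)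
  unfold Smat
  generalize (Real.pi * Complex.I : ℂ) = c at ha hb
  have hm : (β • (1 : Matrix (Fin 2 × Fin 2) (Fin 2 × Fin 2) ℂ) - c • Pmat) *
      ((-β) • (1 : Matrix (Fin 2 × Fin 2) (Fin 2 × Fin 2) ℂ) - c • Pmat) =
      ((β - c) * (-β - c)) • (1 : Matrix (Fin 2 × Fin 2) (Fin 2 × Fin 2) ℂ) := by
    simp only [sub_mul, mul_sub, smul_mul_assoc, mul_smul_comm, Pmat_sq, one_mul, mul_one]
    module
  rw [smul_mul_assoc, mul_smul_comm, hm, smul_smul, smul_smul]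
  have : S0 β * (β - c)⁻¹ * (S0 (-β) * (-β - c)⁻¹ * ((β - c) * (-β - c))) = 1 := by
    rw [← hS]
    field_simp
  first
    | rw [this, one_smul]
    | rw [← mul_assoc] at this; rw [this, one_smul]
end

section
/- Crossing symmetry of the SU(2)-invariant Thirring model S-matrix: for every β ∈ ℂ with β ∉ πi·ℤ, one has S(πi − β) = C₁ · (ᵗ¹S(β)) · C₁, where ᵗ¹ denotes partial transposition in the first tensor factor and C₁ = C ⊗ id. -/
open scoped Matrix Kronecker

/-- The charge conjugation matrix `C = [[0,1],[−1,0]]`. -/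
def Cmat : Matrix (Fin 2) (Fin 2) ℂ := !![0, 1; -1, 0]

/-- `C₁ = C ⊗ id` on `ℂ² ⊗ ℂ²`. -/
def C1 : Matrix (Fin 2 × Fin 2) (Fin 2 × Fin 2) ℂ :=
  Cmat ⊗ₖ (1 : Matrix (Fin 2) (Fin 2) ℂ)

/-- Partial transposition in the first tensor factor:
`(ᵗ¹T)_{(i,j),(k,l)} = T_{(k,j),(i,l)}`. -/
def ptransOne (T : Matrix (Fin 2 × Fin 2) (Fin 2 × Fin 2) ℂ) :
    Matrix (Fin 2 × Fin 2) (Fin 2 × Fin 2) ℂ :=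
  fun p q => T (q.1, p.2) (p.1, q.2)

theorem S0_crossing (β : ℂ) (hβ : ∀ k : ℤ, β ≠ (k : ℂ) * (Real.pi * Complex.I)) :
    S0 (Real.pi * Complex.I - β) = β / (Real.pi * Complex.I - β) * S0 β := by
  have hpi : (Real.pi : ℂ) * Complex.I ≠ 0 :=
    mul_ne_zero (by exact_mod_cast Real.pi_ne_zero) Complex.I_ne_zero
  have h0 : β ≠ 0 := by simpa using hβ 0
  have h1 : (Real.pi : ℂ) * Complex.I - β ≠ 0 := by
    intro h
    apply hβ 1
    push_cast
    linear_combination -h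
  obtain ⟨x, rfl⟩ : ∃ x, β = x * (2 * Real.pi * Complex.I) :=
    ⟨β / (2 * Real.pi * Complex.I), by
      rw [div_mul_cancel₀]; rw [mul_assoc]; exact mul_ne_zero two_ne_zero hpi⟩
  unfold S0
  have hq : (2 * Real.pi * Complex.I : ℂ) ≠ 0 := by
    rw [mul_assoc]; exact mul_ne_zero two_ne_zero hpi
  have e1 : x * (2 * Real.pi * Complex.I) / (2 * Real.pi * Complex.I) = x :=
    mul_div_cancel_right₀ _ hq
  have e2 : (Real.pi * Complex.I - x * (2 * Real.pi * Complex.I)) / (2 * Real.pi * Complex.I)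
      = 1/2 - x := by
    rw [div_eq_iff hq]; ring
  have hx : x ≠ 0 := by
    rintro rfl; simp at h0
  have hx2 : x - 1/2 ≠ 0 := by
    intro h
    apply h1
    linear_combination (-2 * Real.pi * Complex.I) * h
  have e3 : x * (2 * Real.pi * Complex.I) / (Real.pi * Complex.I - x * (2 * Real.pi * Complex.I))
      = -x / (x - 1/2) := by
    rw [div_eq_div_iff h1 hx2]; ring
  rw [neg_div, neg_div, e1, e2, e3]
  have g1 : Complex.Gamma (1/2 + (1/2 - x)) = -x * Complex.Gamma (-x) := by
    rw [← Complex.Gamma_add_one _ (neg_ne_zero.mpr hx)]; congr 1; ring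
  have g2 : Complex.Gamma (1/2 + x) = (x - 1/2) * Complex.Gamma (-(1/2 - x)) := by
    rw [neg_sub, ← Complex.Gamma_add_one _ hx2]; congr 1; ring
  have g3 : (1/2 : ℂ) - (1/2 - x) = x := by ring
  rw [g1, g2, g3, mul_comm (Complex.Gamma x)]
  rw [div_mul_div_comm, mul_comm (x - 1/2), mul_comm (x - 1/2), ← mul_div_mul_right _ _ hx2]
  congr 1
  · ring

/-- Crossing symmetry of the SU(2) ITM S-matrix:
`S(πi − β) = C₁ · ᵗ¹S(β) · C₁` for `β ∉ πi·ℤ`. -/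
theorem Smat_crossing (β : ℂ) (hβ : ∀ k : ℤ, β ≠ (k : ℂ) * (Real.pi * Complex.I)) :
    Smat (Real.pi * Complex.I - β) = C1 * ptransOne (Smat β) * C1 := by
  have h0 : β ≠ 0 := by simpa using hβ 0
  have h1 : (Real.pi : ℂ) * Complex.I - β ≠ 0 := by
    intro h
    apply hβ 1
    push_cast
    linear_combination -h
  have h2 : β - (Real.pi : ℂ) * Complex.I ≠ 0 := by
    intro h; apply h1; linear_combination -h
  have key : S0 (Real.pi * Complex.I - β) *
      (Real.pi * Complex.I - β - Real.pi * Complex.I)⁻¹ =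
      S0 β * (β - Real.pi * Complex.I)⁻¹ := by
    rw [S0_crossing β hβ, sub_sub_cancel_left, ← neg_sub (β : ℂ) (Real.pi * Complex.I)]
    field_simp
  unfold Smat
  rw [key]
  generalize S0 β * (β - Real.pi * Complex.I)⁻¹ = c
  ext ⟨i, j⟩ ⟨k, l⟩
  fin_cases i <;> fin_cases j <;> fin_cases k <;> fin_cases l <;>
    simp [C1, Cmat, ptransOne, Pmat, Matrix.mul_apply, Fintype.sum_prod_type,
      Matrix.one_apply] <;> ring
end

section
/- Antisymmetrization lemma: let r, ℓ be integers with 0 ≤ r < ℓ, let B be a nonzero complex number, and let A_{r+1},…,A_ℓ be nonzero complex numbers. Then ∑_{σ} sgn(σ)·∏_{a=r+1}^{ℓ} A_{σ(a)}^{−2a} = (−1)^{ℓ−r−1} · ∑_{σ} sgn(σ)·[ ∏_{a=r+1}^{ℓ−1}(1 − A_{σ(a)}²·B⁻²) · A_{σ(ℓ)}^{−2(r+1)} · ∏_{a=r+1}^{ℓ−1} A_{σ(a)}^{−2a−2} ], where both sums run over all permutations σ of the index set {r+1,…,ℓ}. -/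
open Finset Equiv

theorem asym_aux (m r : ℕ) (c : ℂ) (A : Fin (m + 1) → ℂ) (hA : ∀ a, A a ≠ 0) :
    ∑ σ : Equiv.Perm (Fin (m + 1)), ((Equiv.Perm.sign σ : ℤ) : ℂ) *
        ∏ a, (A (σ a)) ^ (-(2 : ℤ) * ((r : ℤ) + 1 + (a : ℕ))) =
      (-1 : ℂ) ^ m *
        ∑ σ : Equiv.Perm (Fin (m + 1)), ((Equiv.Perm.sign σ : ℤ) : ℂ) *
          ((∏ a ∈ Finset.univ.filter (fun a : Fin (m + 1) => (a : ℕ) < m),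
              (1 - (A (σ a)) ^ 2 * c)) *
            (A (σ (Fin.last m))) ^ (-(2 : ℤ) * ((r : ℤ) + 1)) *
            ∏ a ∈ Finset.univ.filter (fun a : Fin (m + 1) => (a : ℕ) < m),
              (A (σ a)) ^ (-(2 : ℤ) * ((r : ℤ) + 1 + (a : ℕ)) - 2)) := by
  let V : Matrix (Fin (m + 1)) (Fin (m + 1)) ℂ :=
    fun i j => (A i) ^ (-(2 : ℤ) * ((r : ℤ) + 1 + (j : ℕ)))
  let W : Matrix (Fin (m + 1)) (Fin (m + 1)) ℂ :=
    fun i j => Fin.cases (V i 0) (fun k => V i k.succ - c * V i k.castSucc) j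
  have hVW : V.det = W.det := by
    refine Matrix.det_eq_of_forall_col_eq_smul_add_pred (fun _ => c) ?_ ?_
    · intro i; simp [W]
    · intro i j; simp [W]
  have hN := Matrix.det_permute' (finRotate (m + 1)) W
  rw [sign_finRotate] at hN
  have hfil : (Finset.univ.filter (fun a : Fin (m + 1) => (a : ℕ) < m)) =
      Finset.univ.map Fin.castSuccEmb := by
    ext a
    simp only [Finset.mem_filter, Finset.mem_univ, true_and, Finset.mem_map]
    constructor
    · intro h; exact ⟨⟨a, h⟩, rfl⟩
    · rintro ⟨b, rfl⟩; simp
  have hL : V.det = ∑ σ : Equiv.Perm (Fin (m + 1)), ((Equiv.Perm.sign σ : ℤ) : ℂ) *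
        ∏ a, (A (σ a)) ^ (-(2 : ℤ) * ((r : ℤ) + 1 + (a : ℕ))) := Matrix.det_apply' V
  rw [← hL, hVW]
  have hR : (W.submatrix id (finRotate (m + 1))).det =
      ∑ σ : Equiv.Perm (Fin (m + 1)), ((Equiv.Perm.sign σ : ℤ) : ℂ) *
          ((∏ a ∈ Finset.univ.filter (fun a : Fin (m + 1) => (a : ℕ) < m),
              (1 - (A (σ a)) ^ 2 * c)) *
            (A (σ (Fin.last m))) ^ (-(2 : ℤ) * ((r : ℤ) + 1)) *
            ∏ a ∈ Finset.univ.filter (fun a : Fin (m + 1) => (a : ℕ) < m),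
              (A (σ a)) ^ (-(2 : ℤ) * ((r : ℤ) + 1 + (a : ℕ)) - 2)) := by
    rw [Matrix.det_apply']
    refine Finset.sum_congr rfl fun σ _ => ?_
    congr 1
    rw [hfil, Finset.prod_map, Finset.prod_map, Fin.prod_univ_castSucc, mul_right_comm,
      ← Finset.prod_mul_distrib]
    congr 1
    · refine Finset.prod_congr rfl fun k _ => ?_
      have h0 := hA (σ k.castSucc)
      have hk : finRotate (m + 1) k.castSucc = k.succ := by
        ext; rw [coe_finRotate_of_ne_last (Fin.castSucc_lt_last k).ne]; simp
      rw [Matrix.submatrix_apply, hk]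
      simp only [id, W, V, Fin.cases_succ, Fin.castSuccEmb_apply,
        Fin.val_succ, Fin.val_castSucc]
      have e : (-(2 : ℤ) * ((r : ℤ) + 1 + (k : ℕ))) =
        (-(2 : ℤ) * ((r : ℤ) + 1 + (k : ℕ)) - 2) + 2 := by ring
      have e2 : (-(2 : ℤ) * ((r : ℤ) + 1 + ((k : ℕ) + 1 : ℕ))) =
        (-(2 : ℤ) * ((r : ℤ) + 1 + (k : ℕ)) - 2) := by push_cast; ring
      have e3 : A (σ k.castSucc) ^ (-(2 : ℤ) * ((r : ℤ) + 1 + (k : ℕ))) =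
        A (σ k.castSucc) ^ (-(2 : ℤ) * ((r : ℤ) + 1 + (k : ℕ)) - 2) *
          A (σ k.castSucc) ^ 2 := by
        conv_lhs => rw [e, zpow_add₀ h0]
        rfl
      rw [e2, e3]; ring
    · rw [Matrix.submatrix_apply, finRotate_last]; simp [W, V]
  rw [← hR, hN]
  push_cast
  rw [← mul_assoc, ← mul_pow]; simp

/-- Antisymmetrization lemma: for `0 ≤ r < ℓ`, nonzero `B` and nonzero
`A_{r+1},…,A_ℓ` (indexed here by `a : Fin (ℓ−r)`, with actual index `r+1+a`),
`Asym ∏_{a=r+1}^{ℓ} A_a^{−2a}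
  = (−1)^{ℓ−r−1}·Asym (∏_{a=r+1}^{ℓ−1}(1 − A_a²·B⁻²)·A_ℓ^{−2(r+1)}
      ·∏_{a=r+1}^{ℓ−1} A_a^{−2a−2})`. -/
theorem asym_lemma (r ℓ : ℕ) (h : r < ℓ) (B : ℂ) (hB : B ≠ 0)
    (A : Fin (ℓ - r) → ℂ) (hA : ∀ a, A a ≠ 0) :
    ∑ σ : Equiv.Perm (Fin (ℓ - r)), ((Equiv.Perm.sign σ : ℤ) : ℂ) *
        ∏ a, (A (σ a)) ^ (-(2 : ℤ) * ((r : ℤ) + 1 + (a : ℕ))) =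
      (-1 : ℂ) ^ (ℓ - r - 1) *
        ∑ σ : Equiv.Perm (Fin (ℓ - r)), ((Equiv.Perm.sign σ : ℤ) : ℂ) *
          ((∏ a ∈ Finset.univ.filter (fun a : Fin (ℓ - r) => (a : ℕ) < ℓ - r - 1),
              (1 - (A (σ a)) ^ 2 * (B ^ 2)⁻¹)) *
            (A (σ ⟨ℓ - r - 1, by omega⟩)) ^ (-(2 : ℤ) * ((r : ℤ) + 1)) *
            ∏ a ∈ Finset.univ.filter (fun a : Fin (ℓ - r) => (a : ℕ) < ℓ - r - 1),
              (A (σ a)) ^ (-(2 : ℤ) * ((r : ℤ) + 1 + (a : ℕ)) - 2)) := by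
  have key : ∀ (n : ℕ) (hn : 0 < n) (A : Fin n → ℂ) (hA : ∀ a, A a ≠ 0),
    ∑ σ : Equiv.Perm (Fin n), ((Equiv.Perm.sign σ : ℤ) : ℂ) *
        ∏ a, (A (σ a)) ^ (-(2 : ℤ) * ((r : ℤ) + 1 + (a : ℕ))) =
      (-1 : ℂ) ^ (n - 1) *
        ∑ σ : Equiv.Perm (Fin n), ((Equiv.Perm.sign σ : ℤ) : ℂ) *
          ((∏ a ∈ Finset.univ.filter (fun a : Fin n => (a : ℕ) < n - 1),
              (1 - (A (σ a)) ^ 2 * (B ^ 2)⁻¹)) *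
            (A (σ ⟨n - 1, by omega⟩)) ^ (-(2 : ℤ) * ((r : ℤ) + 1)) *
            ∏ a ∈ Finset.univ.filter (fun a : Fin n => (a : ℕ) < n - 1),
              (A (σ a)) ^ (-(2 : ℤ) * ((r : ℤ) + 1 + (a : ℕ)) - 2)) := by
    intro n hn A hA
    obtain ⟨m, rfl⟩ : ∃ m, n = m + 1 := ⟨n - 1, by omega⟩
    exact asym_aux m r _ A hA
  exact key (ℓ - r) (by omega) A hA
end

section
/- Determinant factorization for the cycle determinant D: let m ≥ 0 and n ≥ m+2 be even integers, r ∈ ℕ, g : ℂ → ℂ a function with g(−z) = g(z) for all z, A₁,…,A_r ∈ ℂ, and B₁,…,B_{n−2}, B nonzero complex numbers such that B₁,…,B_{n−2}, B, −B are pairwise distinct. Then D_n(A₁,…,A_r | B₁,…,B_{n−2}, B, −B) = (−1)^{(n+m)/2} · g(B) · ∏_{a=1}^{r}(1 − A_a²·B⁻²) · D_{n−2}(A₁,…,A_r | B₁,…,B_{n−2}). -/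
open Finset

/-- The `N×N` matrix `M` whose determinant (divided by the Vandermonde-type
product) defines `D_N(A₁,…,A_r | B₁,…,B_N)`: its first `(N+m)/2` rows are
`(B_j^{2i})_j`, `i = 0,…,(N+m−2)/2`, and its remaining `(N−m)/2` rows are
`(g(B_j)·B_j^{2p−1}·∏_{a=1}^{r}(1 − A_a²·B_j⁻²))_j`, `p = 1,…,(N−m)/2`. -/
noncomputable def Dmat (m N : ℕ) (g : ℂ → ℂ) (r : ℕ) (A : Fin r → ℂ)
    (B : Fin N → ℂ) : Matrix (Fin N) (Fin N) ℂ :=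
  fun i j =>
    if (i : ℕ) < (N + m) / 2 then B j ^ (2 * (i : ℕ))
    else g (B j) * B j ^ (2 * ((i : ℕ) - (N + m) / 2) + 1) *
      ∏ a, (1 - (A a) ^ 2 * (B j ^ 2)⁻¹)

/-- `D_N(A₁,…,A_r | B₁,…,B_N) := det M / ∏_{j<j'}(B_j − B_{j'})`. -/
noncomputable def Dval (m N : ℕ) (g : ℂ → ℂ) (r : ℕ) (A : Fin r → ℂ)
    (B : Fin N → ℂ) : ℂ :=
  (Dmat m N g r A B).det /
    ∏ p ∈ Finset.univ.filter (fun p : Fin N × Fin N => p.1 < p.2), (B p.1 - B p.2)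

/-- The vector `(B₁, …, B_{n−2}, B, −B)` of length `n`. -/
def extB (n : ℕ) (B : Fin (n - 2) → ℂ) (b : ℂ) : Fin n → ℂ :=
  fun j => if h : (j : ℕ) < n - 2 then B ⟨j, h⟩ else if (j : ℕ) = n - 2 then b else -b

lemma vand_aux (N : ℕ) (x : Fin (N + 1) → ℂ) :
    ∏ p ∈ Finset.univ.filter (fun p : Fin (N+1) × Fin (N+1) => p.1 < p.2), (x p.1 - x p.2) =
    (∏ p ∈ Finset.univ.filter (fun p : Fin N × Fin N => p.1 < p.2),
      (x p.1.castSucc - x p.2.castSucc)) * ∏ j : Fin N, (x j.castSucc - x (Fin.last N)) := by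
  rw [Finset.prod_filter, Finset.prod_filter, Fintype.prod_prod_type_right,
    Fintype.prod_prod_type_right, Fin.prod_univ_castSucc]
  congr 1
  · refine Finset.prod_congr rfl fun j _ => ?_
    rw [Fin.prod_univ_castSucc]
    have : ¬ (Fin.last N < j.castSucc) := not_lt.2 (Fin.le_last _)
    simp [this]
  · rw [Fin.prod_univ_castSucc]
    simp [Fin.castSucc_lt_last]

lemma extB_cc (N : ℕ) (B : Fin N → ℂ) (b : ℂ) (j : Fin N) :
    extB (N + 2) B b j.castSucc.castSucc = B j := by
  simp [extB]

lemma extB_cl (N : ℕ) (B : Fin N → ℂ) (b : ℂ) :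
    extB (N + 2) B b (Fin.last N).castSucc = b := by
  simp [extB]

lemma extB_l (N : ℕ) (B : Fin N → ℂ) (b : ℂ) :
    extB (N + 2) B b (Fin.last (N + 1)) = -b := by
  simp [extB]

/-- generic double expansion -/
lemma det_two_cols (N : ℕ) (M : Matrix (Fin (N+2)) (Fin (N+2)) ℂ) (k : Fin (N+1)) (d : ℂ)
    (h0 : ∀ i, M i (Fin.last N).castSucc = if i = 0 then 1 else if i = k.succ then d else 0)
    (h1 : ∀ i, M i (Fin.last (N+1)) = if i = 0 then 1 else if i = k.succ then -d else 0) :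
    M.det = (-1) ^ ((k : ℕ) + 1) * (2 * d) *
      (M.submatrix (fun i : Fin N => k.succ.succAbove (Fin.succAbove 0 i))
        (fun j => j.castSucc.castSucc)).det := by
  have hne : Fin.last (N+1) ≠ (Fin.last N).castSucc := (Fin.castSucc_lt_last _).ne'
  rw [← Matrix.det_updateCol_add_smul_self M hne (-1), Matrix.det_succ_column _ (Fin.last (N+1)),
    Finset.sum_eq_single k.succ]
  · rw [Matrix.det_succ_column _ (Fin.last N), Finset.sum_eq_single 0]
    · have e : (((M.updateCol (Fin.last (N+1)) fun i =>
          M i (Fin.last (N+1)) + (-1 : ℂ) • M i (Fin.last N).castSucc).submatrix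
          k.succ.succAbove (Fin.last (N+1)).succAbove).submatrix (Fin.succAbove 0)
          (Fin.last N).succAbove) = (M.submatrix
          (fun i : Fin N => k.succ.succAbove (Fin.succAbove 0 i))
          (fun j => j.castSucc.castSucc)) := by
        ext i j
        simp [Matrix.updateCol_apply, (Fin.castSucc_lt_last _).ne]
      rw [e]
      have hk : (k.succ : Fin (N+2)) ≠ 0 := Fin.succ_ne_zero k
      have : k.succ.succAbove (0 : Fin (N+1)) = 0 := Fin.succAbove_ne_zero_zero hk
      simp only [Matrix.submatrix_apply, Matrix.updateCol_apply, this, h0, h1,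
        Fin.succAbove_last, (Fin.castSucc_lt_last _).ne, hk]
      simp only [if_true, if_false, Fin.val_succ, Fin.val_last, smul_eq_mul, Fin.val_zero]
      have h2 : ((-1:ℂ) ^ N) * (-1) ^ N = 1 := by rw [← mul_pow]; simp
      ring_nf
      rw [mul_comm N 2, pow_mul]
      simp
    · intro i _ hi
      have hk : (k.succ : Fin (N+2)) ≠ 0 := Fin.succ_ne_zero k
      have : k.succ.succAbove i ≠ 0 := Fin.succAbove_ne_zero hk hi
      simp [Matrix.updateCol_apply, h0, this, Fin.succAbove_ne, (Fin.castSucc_lt_last _).ne]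
    · simp
  · intro i _ hi
    simp only [Matrix.updateCol_apply, h0, h1, hi]
    by_cases h : i = 0 <;> simp [h]
  · simp

lemma Dmat_det (N m K : ℕ) (hK : (N + m) / 2 = K) (hK2 : (N + 2 + m) / 2 = K + 1) (hKN : K ≤ N)
    (r : ℕ) (g : ℂ → ℂ) (hg : ∀ z, g (-z) = g z) (A : Fin r → ℂ)
    (B : Fin N → ℂ) (b : ℂ) :
    (Dmat m (N + 2) g r A (extB (N + 2) B b)).det =
      (-1) ^ (K + 1) * (2 * (g b * b * ∏ a, (1 - (A a) ^ 2 * (b ^ 2)⁻¹))) *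
      ((∏ j, (B j ^ 2 - b ^ 2)) * (Dmat m N g r A B).det) := by
  set x := extB (N + 2) B b with hx
  let G : ℂ → ℂ := fun z => g z * ∏ a, (1 - (A a) ^ 2 * (z ^ 2)⁻¹)
  let M' : Matrix (Fin (N+2)) (Fin (N+2)) ℂ := fun i j =>
    if (i : ℕ) = 0 then 1 else if (i : ℕ) < K + 1 then (x j ^ 2 - b ^ 2) * x j ^ (2 * ((i : ℕ) - 1))
    else if (i : ℕ) = K + 1 then G (x j) * x j
    else (x j ^ 2 - b ^ 2) * (G (x j) * x j ^ (2 * ((i : ℕ) - 1 - (K + 1)) + 1))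
  have hdet : (Dmat m (N + 2) g r A x).det = M'.det := by
    refine Matrix.det_eq_of_forall_row_eq_smul_add_pred
      (fun i => if (i : ℕ) = K then 0 else b ^ 2) ?_ ?_
    · intro j
      simp [Dmat, M', hK2]
    · intro i j
      simp only [Dmat, M', hK2, Fin.val_succ, Fin.val_castSucc, G]
      rcases lt_trichotomy (i : ℕ) K with h | h | h
      · have h3 : (i : ℕ) < K + 1 := by omega
        simp [h, h.ne, h3]
        ring
      · simp [h]
        ring
      · obtain ⟨t, ht⟩ := Nat.exists_eq_add_of_lt h
        have e1 : ¬ ((i : ℕ) + 1 < K + 1) := by omega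
        have e2 : ¬ ((i : ℕ) < K + 1) := by omega
        have e3 : ¬ ((i : ℕ) + 1 = K + 1) := by omega
        have e4 : ¬ ((i : ℕ) = K) := by omega
        have e5 : (i : ℕ) + 1 - (K + 1) = t + 1 := by omega
        have e6 : (i : ℕ) - (K + 1) = t := by omega
        have e7 : (i : ℕ) + 1 - 1 - (K + 1) = t := by omega
        simp only [e1, e2, e3, e4, e5, e6, e7, if_false, Nat.succ_ne_zero]
        ring
  have xcc : ∀ j : Fin N, x j.castSucc.castSucc = B j := fun j => extB_cc N B b j
  have xcl : x (Fin.last N).castSucc = b := extB_cl N B b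
  have xl : x (Fin.last (N+1)) = -b := extB_l N B b
  rw [hdet, det_two_cols N M' ⟨K, by omega⟩ (g b * b * ∏ a, (1 - (A a) ^ 2 * (b ^ 2)⁻¹)),
    ← Matrix.det_mul_row]
  · congr 2
    ext i j
    rw [Matrix.submatrix_apply, Matrix.of_apply]
    have hrow : (((⟨K, by omega⟩ : Fin (N+1)).succ.succAbove (Fin.succAbove 0 i) : Fin (N+2)) : ℕ)
        = if (i : ℕ) < K then (i : ℕ) + 1 else i + 2 := by
      rw [Fin.zero_succAbove]
      simp only [Fin.succAbove, Fin.lt_def, Fin.val_castSucc, Fin.val_succ, Nat.add_lt_add_iff_right]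
      split_ifs <;> simp
    simp only [M', hrow, xcc, Dmat, hK, G]
    by_cases h : (i : ℕ) < K
    · simp [h]
    · have e2 : ¬ ((i : ℕ) + 2 < K + 1) := by omega
      have e3 : ¬ ((i : ℕ) + 2 = K + 1) := by omega
      have e4 : ¬ ((i : ℕ) + 2 = 0) := by omega
      have e5 : (i : ℕ) + 2 - 1 - (K + 1) = i - K := by omega
      simp only [h, if_false, e2, e3, e4, e5]
      ring
  · intro i
    simp only [M', xcl, Fin.ext_iff, Fin.val_succ, Fin.val_zero, G]
    split_ifs <;> first | omega | ring
  · intro i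
    simp only [M', xl, Fin.ext_iff, Fin.val_succ, Fin.val_zero, G, hg, neg_sq]
    split_ifs <;> first | omega | ring

/-- Determinant factorization for the cycle determinant `D`: for even
`m ≥ 0`, even `n ≥ m+2`, `g` even, and `B₁,…,B_{n−2},B,−B` pairwise distinct
and nonzero,
`D_n(A | B₁,…,B_{n−2}, B, −B)
  = (−1)^{(n+m)/2}·g(B)·∏_{a=1}^{r}(1 − A_a²·B⁻²)·D_{n−2}(A | B₁,…,B_{n−2})`. -/
theorem Dval_factorization (m n : ℕ) (hm : Even m) (hn : Even n) (hmn : m + 2 ≤ n)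
    (r : ℕ) (g : ℂ → ℂ) (hg : ∀ z, g (-z) = g z) (A : Fin r → ℂ)
    (B : Fin (n - 2) → ℂ) (Bn : ℂ) (hB : ∀ j, B j ≠ 0) (hBn : Bn ≠ 0)
    (hdist : Function.Injective (extB n B Bn)) :
    Dval m n g r A (extB n B Bn) =
      (-1 : ℂ) ^ ((n + m) / 2) * g Bn * (∏ a, (1 - (A a) ^ 2 * (Bn ^ 2)⁻¹)) *
        Dval m (n - 2) g r A B := by
  obtain ⟨N, rfl⟩ : ∃ N, n = N + 2 := ⟨n - 2, by omega⟩
  change Fin N → ℂ at B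
  change Dval m (N + 2) g r A (extB (N + 2) B Bn) =
      (-1 : ℂ) ^ ((N + 2 + m) / 2) * g Bn * (∏ a, (1 - (A a) ^ 2 * (Bn ^ 2)⁻¹)) *
        Dval m N g r A B
  have hK2 : (N + 2 + m) / 2 = (N + m) / 2 + 1 := by omega
  have hne : ∀ j, B j ^ 2 - Bn ^ 2 ≠ 0 := by
    intro j h
    have h' : (B j - Bn) * (B j + Bn) = 0 := by rw [← h]; ring
    rcases mul_eq_zero.1 h' with h1 | h1
    · have := @hdist j.castSucc.castSucc (Fin.last N).castSucc
        ((extB_cc N B Bn j).trans ((sub_eq_zero.1 h1).trans (extB_cl N B Bn).symm))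
      exact (Fin.castSucc_lt_last j).ne (Fin.castSucc_injective _ this)
    · have := @hdist j.castSucc.castSucc (Fin.last (N + 1))
        ((extB_cc N B Bn j).trans ((eq_neg_of_add_eq_zero_left h1).trans (extB_l N B Bn).symm))
      exact (Fin.castSucc_lt_last _).ne this
  have hP : ∏ j, (B j ^ 2 - Bn ^ 2) ≠ 0 := Finset.prod_ne_zero_iff.2 fun j _ => hne j
  have hprod : (∏ j, (B j - Bn)) * ∏ j, (B j - -Bn) = ∏ j, (B j ^ 2 - Bn ^ 2) := by
    rw [← Finset.prod_mul_distrib]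
    exact Finset.prod_congr rfl fun j _ => by ring
  unfold Dval
  rw [Dmat_det N m _ rfl hK2 (by omega) r g hg A B Bn, vand_aux (N + 1),
    vand_aux N (fun j => extB (N + 2) B Bn j.castSucc), Fin.prod_univ_castSucc, hK2]
  simp only [extB_cc, extB_cl, extB_l]
  rw [← hprod] at hP ⊢
  have h1 := left_ne_zero_of_mul hP
  have h2 := right_ne_zero_of_mul hP
  have h3 : Bn - -Bn ≠ 0 := by
    rw [sub_neg_eq_add, ← two_mul]; exact mul_ne_zero two_ne_zero hBn
  generalize (∏ j, (B j - Bn)) = P at *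
  generalize (∏ j, (B j - -Bn)) = Q at *
  generalize (∏ p ∈ Finset.univ.filter (fun p : Fin N × Fin N => p.1 < p.2),
    (B p.1 - B p.2)) = V
  generalize (Dmat m N g r A B).det = D
  generalize (∏ a, (1 - (A a) ^ 2 * (Bn ^ 2)⁻¹)) = c
  rw [show V * P * (Q * (Bn - -Bn)) = V * (P * Q * (Bn - -Bn)) by ring, ← div_div,
    div_eq_iff (mul_ne_zero hP h3)]
  ring
end

section
/- New symmetry of cycles (Proposition of Section 6): fix even integers m ≥ 0 and n ≥ m+2, r ∈ ℕ with m − 2r ≥ 0, ℓ := r + (n−m)/2, a parameter t ∈ ℂ and a constant d ∈ ℂ. Suppose functions P_n (of (A₁,…,A_ℓ; B₁,…,Bₙ)), P_{n−2} (of (A₁,…,A_{ℓ−1}; B₁,…,B_{n−2})), P̃_n and P̄_n (of (A₁,…,A_ℓ; B₁,…,B_{n−2}; B)) satisfy, for all values of the variables in a set where all denominators below are nonzero: (i) P_n(A₁,…,A_ℓ | B₁,…,B_{n−2}, B, −B) = ∏_{a=1}^{r}(1 − A_a²·B⁻²)·P̃_n; (ii) Asym(P̃_n) = Asym(∏_{a=r+1}^{ℓ−1}(1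 − A_a²·B⁻²)·P̄_n), where Asym is antisymmetrization over the variables A_{r+1},…,A_ℓ; (iii) P̄_n(A₁,…,A_{ℓ−1}, ε·B | B₁,…,B_{n−2} | B) = ε·B^{n−1}·d·P_{n−2}(A₁,…,A_{ℓ−1} | B₁,…,B_{n−2}) for ε = ±1. Then, with P_n^{new} := P_n·Q_n and P_{n−2}^{new} := P_{n−2}·Q_{n−2}, there exist functions P̃_n^{new} and P̄_n^{new} such that conditions (i), (ii), (iii) hold for P_n^{new}, P_{n−2}^{new}, P̃_n^{new}, P̄_n^{new} with the same constant d. -/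
open Finset Equiv

/-- The symmetry factor
`Q_N(A₁,…,A_{r+q} | B₁,…,B_N) := ∏_{b=1}^{q}(1 − A_{r+b}²·t²) / ∏_{j=1}^{N}(1 − B_j·t)`,
where `q` is instantiated to `(N−m)/2` and `t` plays the role of `e^y`. -/
noncomputable def Qfac (t : ℂ) (r q N : ℕ) (A : Fin (r + q) → ℂ)
    (B : Fin N → ℂ) : ℂ :=
  (∏ b : Fin q, (1 - (A (Fin.natAdd r b)) ^ 2 * t ^ 2)) / ∏ j, (1 - B j * t)

/-- Antisymmetrization over the tail variables `A_{r+1},…,A_{r+q}`: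
`Asym f (A) := ∑_{σ ∈ Perm(Fin q)} sgn(σ)·f(A₁,…,A_r, A_{r+σ(1)},…,A_{r+σ(q)})`. -/
noncomputable def Asym (r q : ℕ) (f : (Fin (r + q) → ℂ) → ℂ)
    (A : Fin (r + q) → ℂ) : ℂ :=
  ∑ σ : Equiv.Perm (Fin q), ((Equiv.Perm.sign σ : ℤ) : ℂ) *
    f (fun i => Fin.addCases (motive := fun _ => ℂ)
        (fun a => A (Fin.castAdd q a)) (fun c => A (Fin.natAdd r (σ c))) i)

theorem Asym_mul_symm (r q N : ℕ) (t : ℂ) (C : Fin N → ℂ)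
    (f : (Fin (r + q) → ℂ) → ℂ) (A : Fin (r + q) → ℂ) :
    Asym r q (fun A' => f A' * Qfac t r q N A' C) A = Asym r q f A * Qfac t r q N A C := by
  unfold Asym
  rw [Finset.sum_mul]
  refine Finset.sum_congr rfl fun σ _ => ?_
  have : Qfac t r q N (fun i => Fin.addCases (motive := fun _ => ℂ)
        (fun a => A (Fin.castAdd q a)) (fun c => A (Fin.natAdd r (σ c))) i) C
      = Qfac t r q N A C := by
    unfold Qfac
    congr 1
    simp only [Fin.addCases_right]
    exact Equiv.prod_comp σ (fun c => 1 - (A (Fin.natAdd r c)) ^ 2 * t ^ 2)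
  beta_reduce
  rw [this, mul_assoc]

/-- New symmetry of cycles (Proposition of Section 6): if the family
`(P_n, P_{n−2}, P̃_n, P̄_n)` satisfies the residue conditions (i)–(iii)
(with `n = m + 2(q+1)`, `ℓ = r + q + 1`, constant `d`), then the multiplied
family `P_n·Q_n`, `P_{n−2}·Q_{n−2}` satisfies them as well, with the same
constant `d`, on the set where additionally the denominators of `Q` do not
vanish. -/
theorem new_symmetry (m : ℕ) (hm : Even m) (r q : ℕ) (hr : 2 * r ≤ m)
    (t d : ℂ)
    (Pn : (Fin (r + q + 1) → ℂ) → (Fin (m + 2 * q + 2) → ℂ) → ℂ)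
    (Pn2 : (Fin (r + q) → ℂ) → (Fin (m + 2 * q) → ℂ) → ℂ)
    (Pt Pb : (Fin (r + q + 1) → ℂ) → (Fin (m + 2 * q) → ℂ) → ℂ → ℂ)
    (h1 : ∀ (A : Fin (r + q + 1) → ℂ) (B : Fin (m + 2 * q) → ℂ) (b : ℂ),
      b ≠ 0 → (∀ j, B j ≠ 0) →
      Pn A (Fin.snoc (Fin.snoc B b) (-b)) =
        (∏ a : Fin r, (1 - (A (Fin.castAdd (q + 1) a)) ^ 2 * (b ^ 2)⁻¹)) * Pt A B b)
    (h2 : ∀ (A : Fin (r + q + 1) → ℂ) (B : Fin (m + 2 * q) → ℂ) (b : ℂ),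
      b ≠ 0 → (∀ j, B j ≠ 0) →
      Asym r (q + 1) (fun A' => Pt A' B b) A =
        Asym r (q + 1) (fun A' =>
          (∏ c ∈ Finset.univ.filter (fun c : Fin (q + 1) => (c : ℕ) < q),
            (1 - (A' (Fin.natAdd r c)) ^ 2 * (b ^ 2)⁻¹)) * Pb A' B b) A)
    (h3 : ∀ (A : Fin (r + q) → ℂ) (B : Fin (m + 2 * q) → ℂ) (b ε : ℂ),
      b ≠ 0 → (∀ j, B j ≠ 0) → (ε = 1 ∨ ε = -1) →
      Pb (Fin.snoc A (ε * b)) B b = ε * b ^ (m + 2 * q + 1) * d * Pn2 A B) :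
    ∃ Pt' Pb' : (Fin (r + q + 1) → ℂ) → (Fin (m + 2 * q) → ℂ) → ℂ → ℂ,
      (∀ (A : Fin (r + q + 1) → ℂ) (B : Fin (m + 2 * q) → ℂ) (b : ℂ),
        b ≠ 0 → (∀ j, B j ≠ 0) → (∀ j, 1 - B j * t ≠ 0) →
        1 - b * t ≠ 0 → 1 + b * t ≠ 0 →
        Pn A (Fin.snoc (Fin.snoc B b) (-b)) *
            Qfac t r (q + 1) (m + 2 * q + 2) A (Fin.snoc (Fin.snoc B b) (-b)) =
          (∏ a : Fin r, (1 - (A (Fin.castAdd (q + 1) a)) ^ 2 * (b ^ 2)⁻¹)) *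
            Pt' A B b) ∧
      (∀ (A : Fin (r + q + 1) → ℂ) (B : Fin (m + 2 * q) → ℂ) (b : ℂ),
        b ≠ 0 → (∀ j, B j ≠ 0) → (∀ j, 1 - B j * t ≠ 0) →
        1 - b * t ≠ 0 → 1 + b * t ≠ 0 →
        Asym r (q + 1) (fun A' => Pt' A' B b) A =
          Asym r (q + 1) (fun A' =>
            (∏ c ∈ Finset.univ.filter (fun c : Fin (q + 1) => (c : ℕ) < q),
              (1 - (A' (Fin.natAdd r c)) ^ 2 * (b ^ 2)⁻¹)) * Pb' A' B b) A) ∧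
      (∀ (A : Fin (r + q) → ℂ) (B : Fin (m + 2 * q) → ℂ) (b ε : ℂ),
        b ≠ 0 → (∀ j, B j ≠ 0) → (∀ j, 1 - B j * t ≠ 0) →
        1 - b * t ≠ 0 → 1 + b * t ≠ 0 → (ε = 1 ∨ ε = -1) →
        Pb' (Fin.snoc A (ε * b)) B b =
          ε * b ^ (m + 2 * q + 1) * d *
            (Pn2 A B * Qfac t r q (m + 2 * q) A B)) := by
  refine ⟨fun A B b => Pt A B b * Qfac t r (q + 1) (m + 2 * q + 2) A (Fin.snoc (Fin.snoc B b) (-b)),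
    fun A B b => Pb A B b * Qfac t r (q + 1) (m + 2 * q + 2) A (Fin.snoc (Fin.snoc B b) (-b)),
    ?_, ?_, ?_⟩
  · intro A B b hb hB _ _ _
    rw [h1 A B b hb hB, mul_assoc]
  · intro A B b hb hB _ _ _
    simp only [← mul_assoc]
    rw [Asym_mul_symm r (q + 1) (m + 2 * q + 2) t _ (fun A' => Pt A' B b), h2 A B b hb hB]
    exact (Asym_mul_symm r (q + 1) (m + 2 * q + 2) t _ _ A).symm
  · intro A B b ε hb hB hBt hm1 hp1 hε
    have key : Qfac t r (q + 1) (m + 2 * q + 2) (Fin.snoc A (ε * b) : Fin (r + q + 1) → ℂ)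
        (Fin.snoc (Fin.snoc B b) (-b)) = Qfac t r q (m + 2 * q) A B := by
      have hprod : ∏ j, (1 - B j * t) ≠ 0 := Finset.prod_ne_zero_iff.mpr fun j _ => hBt j
      have hsq : ε ^ 2 = 1 := by rcases hε with h | h <;> simp [h]
      have e1 : ∀ c : Fin q, (Fin.snoc A (ε * b) : Fin (r + q + 1) → ℂ)
          (Fin.natAdd r c.castSucc) = A (Fin.natAdd r c) := fun c =>
        Fin.snoc_castSucc (α := fun _ => ℂ) (ε * b) A (Fin.natAdd r c)
      have e2 : (Fin.snoc A (ε * b) : Fin (r + q + 1) → ℂ)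
          (Fin.natAdd r (Fin.last q)) = ε * b :=
        Fin.snoc_last (α := fun _ => ℂ) (ε * b) A
      unfold Qfac
      rw [Fin.prod_univ_castSucc, Fin.prod_univ_castSucc, Fin.prod_univ_castSucc]
      simp only [Fin.snoc_castSucc, Fin.snoc_last]
      have hp2 : 1 - -b * t ≠ 0 := by simpa [sub_eq_add_neg] using hp1
      rw [div_eq_div_iff (mul_ne_zero (mul_ne_zero hprod hm1) hp2) hprod]
      simp only [e1, e2]
      rw [mul_pow, hsq]
      ring
    simp only []
    rw [key, h3 A B b ε hb hB hε]
    ring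
end

section
/- Two-point factorization of the integrand function φ at the kinematical pole: for every u ∈ ℂ with u ∉ πi·ℤ, e^{u/2}·Γ((u + 2πi)/(2πi))·Γ((u + πi)/(−2πi)) · e^{(u−πi)/2}·Γ((u + πi)/(2πi))·Γ(u/(−2πi)) = −(2πi)³ / ((u + πi)·(1 − e^{−2u})). -/
open Complex

/-- Two-point factorization of the integrand function `φ` at the kinematical
pole: for `u ∉ πi·ℤ`,
`e^{u/2}·Γ((u+2πi)/(2πi))·Γ((u+πi)/(−2πi))
  · e^{(u−πi)/2}·Γ((u+πi)/(2πi))·Γ(u/(−2πi))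
  = −(2πi)³/((u+πi)·(1 − e^{−2u}))`. -/
theorem phi_pair_factorization (u : ℂ)
    (hu : ∀ k : ℤ, u ≠ (k : ℂ) * (Real.pi * Complex.I)) :
    (Complex.exp (u / 2) *
        Complex.Gamma ((u + 2 * Real.pi * Complex.I) / (2 * Real.pi * Complex.I)) *
        Complex.Gamma ((u + Real.pi * Complex.I) / (-(2 * Real.pi * Complex.I)))) *
      (Complex.exp ((u - Real.pi * Complex.I) / 2) *
        Complex.Gamma ((u + Real.pi * Complex.I) / (2 * Real.pi * Complex.I)) *
        Complex.Gamma (u / (-(2 * Real.pi * Complex.I)))) =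
    -(2 * Real.pi * Complex.I) ^ 3 /
      ((u + Real.pi * Complex.I) * (1 - Complex.exp (-2 * u))) := by
  have hpi : (Real.pi : ℂ) ≠ 0 := by exact_mod_cast Real.pi_ne_zero
  have hI : Complex.I ≠ 0 := Complex.I_ne_zero
  have hI2 : Complex.I ^ 2 = -1 := Complex.I_sq
  have hw : u + Real.pi * Complex.I ≠ 0 := by
    intro h
    apply hu (-1)
    push_cast
    linear_combination h
  have hE : 1 - Complex.exp (-2 * u) ≠ 0 := by
    intro h
    have h1 : Complex.exp (-2 * u) = 1 := by linear_combination -h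
    obtain ⟨n, hn⟩ := Complex.exp_eq_one_iff.mp h1
    apply hu (-n)
    push_cast
    linear_combination (-1 / 2) * hn
  obtain ⟨z, hz⟩ : ∃ z : ℂ, u = 2 * Real.pi * Complex.I * z :=
    ⟨u / (2 * Real.pi * Complex.I), by field_simp⟩
  have e1 : (u + 2 * Real.pi * Complex.I) / (2 * Real.pi * Complex.I) = 1 - (-z) := by
    rw [hz]; field_simp; ring
  have e2 : (u + Real.pi * Complex.I) / (-(2 * Real.pi * Complex.I)) = -(z + 1 / 2) := by
    rw [hz]; field_simp
  have e3 : (u + Real.pi * Complex.I) / (2 * Real.pi * Complex.I) = z + 1 / 2 := by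
    rw [hz]; field_simp
  have e4 : u / (-(2 * Real.pi * Complex.I)) = -z := by
    rw [hz]; field_simp
  have hw' : z + 1 / 2 ≠ 0 := by
    rw [← e3]; exact div_ne_zero hw (by simp [hpi])
  have hwz : u + Real.pi * Complex.I = 2 * Real.pi * Complex.I * (z + 1 / 2) := by
    rw [hz]; ring
  have g1 := Complex.Gamma_mul_Gamma_one_sub (-z)
  have g2 := Complex.Gamma_mul_Gamma_one_sub (z + 1 / 2)
  have g3 := Complex.Gamma_add_one (-(z + 1 / 2)) (neg_ne_zero.mpr hw')
  rw [show -(z + 1 / 2) + 1 = 1 - (z + 1 / 2) by ring] at g3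
  rw [g3] at g2
  have hab : Complex.exp (u / 2) * Complex.exp (-(u / 2)) = 1 := by
    rw [← Complex.exp_add]; simp
  have hb4 : Complex.exp (-2 * u) = Complex.exp (-(u / 2)) ^ 4 := by
    rw [← Complex.exp_nat_mul]; congr 1; push_cast; ring
  have ha : Complex.exp ((u - Real.pi * Complex.I) / 2)
      = Complex.exp (u / 2) * (-Complex.I) := by
    rw [show (u - Real.pi * Complex.I) / 2 = u / 2 + -(Real.pi / 2 * Complex.I) by ring,
      Complex.exp_add, Complex.exp_neg (Real.pi / 2 * Complex.I), Complex.exp_pi_div_two_mul_I,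
      Complex.inv_I]
  have s1 : Complex.sin (Real.pi * -z)
      = (Complex.exp (u / 2) - Complex.exp (-(u / 2))) * Complex.I / 2 := by
    rw [Complex.sin, show -(Real.pi * -z) * Complex.I = u / 2 by rw [hz]; ring,
      show (Real.pi * -z) * Complex.I = -(u / 2) by rw [hz]; ring]
  have s2 : Complex.sin (Real.pi * (z + 1 / 2))
      = (Complex.exp (u / 2) + Complex.exp (-(u / 2))) / 2 := by
    rw [show (Real.pi : ℂ) * (z + 1 / 2) = Real.pi * z + Real.pi / 2 by ring,
      Complex.sin_add_pi_div_two, Complex.cos,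
      show -(Real.pi * z) * Complex.I = -(u / 2) by rw [hz]; ring,
      show (Real.pi * z) * Complex.I = u / 2 by rw [hz]; ring]
  rw [s1] at g1
  rw [s2] at g2
  rw [e1, e2, e3, e4, ha, hwz, hb4]
  rw [hb4] at hE
  generalize Complex.exp (u / 2) = a at *
  generalize Complex.exp (-(u / 2)) = b at *
  generalize z + 1 / 2 = w at *
  generalize Complex.Gamma (1 - -z) = G1 at *
  generalize Complex.Gamma (-z) = G2 at *
  generalize Complex.Gamma w = G3 at *
  generalize Complex.Gamma (-w) = G4 at *
  have hf : 1 - b ^ 4 = b ^ 2 * (a - b) * (a + b) := by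
    linear_combination (-(a * b) - 1) * hab
  have hm : a - b ≠ 0 := by
    intro h; apply hE; rw [hf, h]; ring
  have hp : a + b ≠ 0 := by
    intro h; apply hE; rw [hf, h]; ring
  have hb : b ≠ 0 := right_ne_zero_of_mul (hab.trans_ne one_ne_zero)
  have g2' : G3 * G4 = -(Real.pi / ((a + b) / 2)) / w := by
    rw [← g2]; field_simp
  have : a = 1 / b := by field_simp; exact hab
  calc _ = a ^ 2 * (-Complex.I) * (G2 * G1) * (G3 * G4) := by ring
    _ = _ := by
      rw [g1, g2', hf]
      have ha2 : a ^ 2 * b ^ 2 = 1 := by rw [← mul_pow, hab, one_pow]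
      field_simp
      linear_combination ha2 + hI2
end

section
/- Gamma-product identity for the residue constant U_n: let n ≥ 2 be an even integer and let γ, β₁,…,β_{n−2} ∈ ℂ satisfy γ − β_j ∉ πi·ℤ for all j. Then (2πi)^{−(n−2)} · ∏_{j=1}^{n−2} [ e^{(γ−β_j)/2}·Γ((γ−β_j+2πi)/(2πi))·Γ((γ−β_j+πi)/(−2πi))·(γ−β_j+πi)/(γ−β_j) ] = (−2π)^{n/2−1} · e^{(1/2)·∑_{j=1}^{n−2}(γ−β_j)} · ∏_{j=1}^{n−2} [ Γ₁(−i(β_j−γ)+π) · Γ₁(i(β_j−γ)) ]. -/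
open Complex Finset

/-- `Γ₁(x) := (2π)^{x/(2π) − 1}·Γ(x/(2π))`, with the principal complex power
of the positive real number `2π`. -/
noncomputable def Gamma1 (x : ℂ) : ℂ :=
  (2 * (Real.pi : ℂ)) ^ (x / (2 * Real.pi) - 1) * Complex.Gamma (x / (2 * Real.pi))


lemma factor_aux (x : ℂ) (h : ∀ k : ℤ, x ≠ (k : ℂ) * (Real.pi * Complex.I)) :
    Complex.Gamma ((x + 2 * Real.pi * Complex.I) / (2 * Real.pi * Complex.I)) *
      Complex.Gamma ((x + Real.pi * Complex.I) / (-(2 * Real.pi * Complex.I))) *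
      ((x + Real.pi * Complex.I) / x) =
    - (Complex.Gamma (1 / 2 - x / (2 * Real.pi * Complex.I)) *
      Complex.Gamma (x / (2 * Real.pi * Complex.I))) := by
  have hpi : (Real.pi : ℂ) ≠ 0 := by exact_mod_cast Real.pi_ne_zero
  have hI := Complex.I_ne_zero
  have hc : (2 * Real.pi * Complex.I : ℂ) ≠ 0 := by simp [hpi]
  have hx : x ≠ 0 := by simpa using h 0
  have hx1 : x + Real.pi * Complex.I ≠ 0 := by
    intro e
    apply h (-1)
    push_cast
    linear_combination e
  obtain ⟨z, rfl⟩ : ∃ z, x = z * (2 * Real.pi * Complex.I) :=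
    ⟨x / (2 * Real.pi * Complex.I), by field_simp⟩
  have hz : z ≠ 0 := left_ne_zero_of_mul hx
  have hz1 : -z - 1 / 2 ≠ 0 := by
    intro e
    apply hx1
    linear_combination (-(2 * Real.pi * Complex.I)) * e
  have e1 : (z * (2 * Real.pi * Complex.I) + 2 * Real.pi * Complex.I) / (2 * Real.pi * Complex.I)
      = z + 1 := by field_simp
  have e2 : (z * (2 * Real.pi * Complex.I) + Real.pi * Complex.I) / (-(2 * Real.pi * Complex.I))
      = -z - 1 / 2 := by field_simp; ring
  have e3 : (z * (2 * Real.pi * Complex.I) + Real.pi * Complex.I) / (z * (2 * Real.pi * Complex.I))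
      = (z + 1 / 2) / z := by field_simp
  have e4 : z * (2 * Real.pi * Complex.I) / (2 * Real.pi * Complex.I) = z := by field_simp
  have e5 : (1 / 2 - z : ℂ) = (-z - 1 / 2) + 1 := by ring
  rw [e1, e2, e3, e4, e5, Complex.Gamma_add_one _ hz, Complex.Gamma_add_one _ hz1]
  field_simp
  ring

lemma gamma1_aux (x : ℂ) :
    Gamma1 (Complex.I * x + Real.pi) * Gamma1 (-(Complex.I * x)) =
    (2 * (Real.pi : ℂ)) ^ (-3 / 2 : ℂ) *
    (Complex.Gamma (1 / 2 - x / (2 * Real.pi * Complex.I)) *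
      Complex.Gamma (x / (2 * Real.pi * Complex.I))) := by
  have hpi : (Real.pi : ℂ) ≠ 0 := by exact_mod_cast Real.pi_ne_zero
  have hI := Complex.I_ne_zero
  have e4 : -(Complex.I * x) / (2 * Real.pi) = x / (2 * Real.pi * Complex.I) := by
    field_simp
    linear_combination (-x) * Complex.I_sq
  have e5 : (Complex.I * x + Real.pi) / (2 * Real.pi)
      = 1 / 2 - x / (2 * Real.pi * Complex.I) := by
    rw [← e4]; field_simp; ring
  unfold Gamma1
  rw [e4, e5]
  have e6 : (-3 / 2 : ℂ) = (1 / 2 - x / (2 * Real.pi * Complex.I) - 1)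
      + (x / (2 * Real.pi * Complex.I) - 1) := by ring
  rw [e6, Complex.cpow_add _ _ (by simp [hpi])]
  ring

/-- Gamma-product identity for the residue constant `U_n`: for even `n ≥ 2`
and `γ − β_j ∉ πi·ℤ`,
`(2πi)^{−(n−2)}·∏_j [e^{(γ−β_j)/2}·Γ((γ−β_j+2πi)/(2πi))·Γ((γ−β_j+πi)/(−2πi))
    ·(γ−β_j+πi)/(γ−β_j)]
 = (−2π)^{n/2−1}·e^{(1/2)∑_j(γ−β_j)}·∏_j [Γ₁(−i(β_j−γ)+π)·Γ₁(i(β_j−γ))]`. -/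
theorem gamma_product_Un (n : ℕ) (hn : Even n) (h2 : 2 ≤ n)
    (γ : ℂ) (β : Fin (n - 2) → ℂ)
    (h : ∀ j (k : ℤ), γ - β j ≠ (k : ℂ) * (Real.pi * Complex.I)) :
    (2 * Real.pi * Complex.I) ^ (-((n : ℤ) - 2)) *
        ∏ j, (Complex.exp ((γ - β j) / 2) *
          Complex.Gamma ((γ - β j + 2 * Real.pi * Complex.I) / (2 * Real.pi * Complex.I)) *
          Complex.Gamma ((γ - β j + Real.pi * Complex.I) / (-(2 * Real.pi * Complex.I))) *
          ((γ - β j + Real.pi * Complex.I) / (γ - β j))) =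
      (-2 * Real.pi : ℂ) ^ (n / 2 - 1) *
        Complex.exp ((1 / 2) * ∑ j, (γ - β j)) *
        ∏ j, (Gamma1 (-Complex.I * (β j - γ) + Real.pi) *
          Gamma1 (Complex.I * (β j - γ))) := by
  have hpi : (Real.pi : ℂ) ≠ 0 := by exact_mod_cast Real.pi_ne_zero
  obtain ⟨m, rfl⟩ : ∃ m, n = 2 * m + 2 := by
    obtain ⟨r, hr⟩ := hn
    exact ⟨r - 1, by omega⟩
  have hL : ∀ j, (Complex.exp ((γ - β j) / 2) *
          Complex.Gamma ((γ - β j + 2 * Real.pi * Complex.I) / (2 * Real.pi * Complex.I)) *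
          Complex.Gamma ((γ - β j + Real.pi * Complex.I) / (-(2 * Real.pi * Complex.I))) *
          ((γ - β j + Real.pi * Complex.I) / (γ - β j))) =
      (-1) * (Complex.exp (1 / 2 * (γ - β j)) *
        (Complex.Gamma (1 / 2 - (γ - β j) / (2 * Real.pi * Complex.I)) *
        Complex.Gamma ((γ - β j) / (2 * Real.pi * Complex.I)))) := by
    intro j
    have := factor_aux (γ - β j) (h j)
    rw [show (1 / 2 * (γ - β j)) = (γ - β j) / 2 by ring]
    linear_combination Complex.exp ((γ - β j) / 2) * this
  have hR : ∀ j, Gamma1 (-Complex.I * (β j - γ) + Real.pi) * Gamma1 (Complex.I * (β j - γ)) =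
      (2 * (Real.pi : ℂ)) ^ (-3 / 2 : ℂ) *
        (Complex.Gamma (1 / 2 - (γ - β j) / (2 * Real.pi * Complex.I)) *
        Complex.Gamma ((γ - β j) / (2 * Real.pi * Complex.I))) := by
    intro j
    rw [← gamma1_aux]
    congr 2 <;> ring
  have hsq : ((2 * (Real.pi : ℂ)) ^ (-3 / 2 : ℂ)) ^ 2 = ((2 * (Real.pi : ℂ)) ^ 3)⁻¹ := by
    rw [← Complex.cpow_nat_mul]
    rw [show ((2 : ℕ) : ℂ) * (-3 / 2) = -((3 : ℕ) : ℂ) by push_cast; ring]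
    rw [Complex.cpow_neg, Complex.cpow_natCast]
  have hcard : 2 * m + 2 - 2 = 2 * m := by omega
  have hm : (2 * m + 2) / 2 - 1 = m := by omega
  have hz : (-(((2 * m + 2 : ℕ) : ℤ) - 2)) = -((2 * m : ℕ) : ℤ) := by push_cast; ring
  rw [Finset.prod_congr rfl (fun j _ => hL j), Finset.prod_congr rfl (fun j _ => hR j)]
  rw [Finset.mul_sum, Complex.exp_sum]
  simp only [Finset.prod_mul_distrib, Finset.prod_const, Finset.card_univ, Fintype.card_fin]
  rw [hm, hz, zpow_neg, zpow_natCast]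
  have hk : ((2 * Real.pi * Complex.I : ℂ) ^ (2 * m))⁻¹ * (-1) ^ (2 * m + 2 - 2) =
      (-2 * Real.pi : ℂ) ^ m * ((2 * (Real.pi : ℂ)) ^ (-3 / 2 : ℂ)) ^ (2 * m + 2 - 2) := by
    rw [hcard, pow_mul, pow_mul, pow_mul, hsq, ← inv_pow, ← mul_pow, ← mul_pow]
    congr 1
    rw [mul_pow, Complex.I_sq]
    field_simp
  linear_combination (∏ j, Complex.exp (1 / 2 * (γ - β j))) *
    ((∏ j, Complex.Gamma (1 / 2 - (γ - β j) / (2 * Real.pi * Complex.I))) *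
    ∏ j, Complex.Gamma ((γ - β j) / (2 * Real.pi * Complex.I))) * hk
end

section
/- Gamma-product identity for the residue constant with S-matrix factors: let n ≥ 2 be an even integer and let γ, β₁,…,β_{n−2} ∈ ℂ satisfy γ − β_j ∉ πi·ℤ for all j. Then (2πi)^{−(n−2)} · ∏_{j=1}^{n−2} [ e^{(γ+πi−β_j)/2}·Γ((γ−β_j+3πi)/(2πi))·Γ((γ−β_j+2πi)/(−2πi)) ] · ∏_{j=1}^{n−2} (γ−β_j+2πi)/(γ−β_j+πi) = (−1)^{n/2−1}·(−2π)^{n/2−1} · e^{(1/2)·∑_{j=1}^{n−2}(γ−β_j)} · ∏_{j=1}^{n−2} [ Γ₁(−i(β_j−γ)+π) · Γ₁(i(β_j−γ)) ] · ∏_{j=1}^{n−2} S₀(γ−β_j). -/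
open Complex Finset

lemma aux_left (d : ℂ) (h : ∀ k : ℤ, d ≠ (k : ℂ) * (Real.pi * Complex.I)) :
    Complex.exp ((d + Real.pi * Complex.I) / 2) *
      Complex.Gamma ((d + 3 * Real.pi * Complex.I) / (2 * Real.pi * Complex.I)) *
      Complex.Gamma ((d + 2 * Real.pi * Complex.I) / (-(2 * Real.pi * Complex.I))) *
      ((d + 2 * Real.pi * Complex.I) / (d + Real.pi * Complex.I)) =
    -Complex.I * (Complex.exp (1 / 2 * d) *
      (Complex.Gamma (1/2 + d / (2 * Real.pi * Complex.I)) *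
       Complex.Gamma (-d / (2 * Real.pi * Complex.I)))) := by
  have hpi : (Real.pi : ℂ) ≠ 0 := by exact_mod_cast Real.pi_ne_zero
  have hI := Complex.I_ne_zero
  obtain ⟨z, rfl⟩ : ∃ z : ℂ, d = 2 * Real.pi * Complex.I * z :=
    ⟨d / (2 * Real.pi * Complex.I), by field_simp⟩
  have h1 : z + 1 / 2 ≠ 0 := by
    intro hz
    apply h (-1)
    have : z = -1 / 2 := by linear_combination hz
    subst this; push_cast; ring
  have h2 : z + 1 ≠ 0 := by
    intro hz
    apply h (-2)
    have : z = -1 := by linear_combination hz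
    subst this; push_cast; ring
  have e1 : (2 * Real.pi * Complex.I * z + 3 * Real.pi * Complex.I) / (2 * Real.pi * Complex.I)
      = (z + 1 / 2) + 1 := by field_simp; ring
  have e2 : (2 * Real.pi * Complex.I * z + 2 * Real.pi * Complex.I) / (-(2 * Real.pi * Complex.I))
      = -z - 1 := by field_simp; ring
  have e3 : (2 * Real.pi * Complex.I * z + 2 * Real.pi * Complex.I) /
      (2 * Real.pi * Complex.I * z + Real.pi * Complex.I) = (z + 1) / (z + 1 / 2) := by
    rw [show 2 * Real.pi * Complex.I * z + 2 * Real.pi * Complex.I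
      = (2 * Real.pi * Complex.I) * (z + 1) by ring,
      show 2 * Real.pi * Complex.I * z + Real.pi * Complex.I
      = (2 * Real.pi * Complex.I) * (z + 1 / 2) by ring,
      mul_div_mul_left _ _ (by simp [hpi])]
  have e4 : 2 * Real.pi * Complex.I * z / (2 * Real.pi * Complex.I) = z := by field_simp
  have e5 : -(2 * Real.pi * Complex.I * z) / (2 * Real.pi * Complex.I) = -z := by field_simp
  have e6 : Complex.exp ((2 * Real.pi * Complex.I * z + Real.pi * Complex.I) / 2)
      = Complex.exp (1 / 2 * (2 * Real.pi * Complex.I * z)) * Complex.I := by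
    rw [show (2 * Real.pi * Complex.I * z + Real.pi * Complex.I) / 2
      = 1 / 2 * (2 * Real.pi * Complex.I * z) + Real.pi / 2 * Complex.I by ring,
      Complex.exp_add, Complex.exp_pi_div_two_mul_I]
  have h3 : -z - 1 ≠ 0 := by
    intro hz; apply h2; linear_combination -hz
  have g2 : Complex.Gamma (-z) = (-z - 1) * Complex.Gamma (-z - 1) := by
    rw [← Complex.Gamma_add_one _ h3]; congr 1; ring
  rw [e1, e2, e3, e4, e5, e6, Complex.Gamma_add_one _ h1, g2, add_comm (1 / 2 : ℂ) z]
  rw [mul_div_assoc', div_eq_iff h1]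
  ring

lemma aux_right (d : ℂ) (h : ∀ k : ℤ, d ≠ (k : ℂ) * (Real.pi * Complex.I)) :
    Gamma1 (Complex.I * d + Real.pi) * Gamma1 (-Complex.I * d) * S0 d =
    (2 * (Real.pi : ℂ)) ^ (-3 / 2 : ℂ) *
      (Complex.Gamma (1/2 + d / (2 * Real.pi * Complex.I)) *
       Complex.Gamma (-d / (2 * Real.pi * Complex.I))) := by
  have hpi : (Real.pi : ℂ) ≠ 0 := by exact_mod_cast Real.pi_ne_zero
  have hI := Complex.I_ne_zero
  obtain ⟨z, rfl⟩ : ∃ z : ℂ, d = 2 * Real.pi * Complex.I * z :=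
    ⟨d / (2 * Real.pi * Complex.I), by field_simp⟩
  have g1 : Complex.Gamma (1 / 2 - z) ≠ 0 := by
    apply Complex.Gamma_ne_zero
    intro m hm
    apply h (2 * m + 1)
    have : z = 1 / 2 + m := by linear_combination -hm
    subst this; push_cast; ring
  have g2 : Complex.Gamma z ≠ 0 := by
    apply Complex.Gamma_ne_zero
    intro m hm
    apply h (-2 * m)
    subst hm; push_cast; ring
  have e1 : (Complex.I * (2 * Real.pi * Complex.I * z) + Real.pi) / (2 * Real.pi)
      = 1 / 2 - z := by
    field_simp
    linear_combination 2 * z * Complex.I_sq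
  have e2 : (-Complex.I * (2 * Real.pi * Complex.I * z)) / (2 * Real.pi) = z := by
    field_simp
    linear_combination -z * Complex.I_sq
  have e4 : 2 * Real.pi * Complex.I * z / (2 * Real.pi * Complex.I) = z := by field_simp
  have e5 : -(2 * Real.pi * Complex.I * z) / (2 * Real.pi * Complex.I) = -z := by field_simp
  have hc : (2 * (Real.pi : ℂ)) ^ (-3 / 2 : ℂ) =
      (2 * (Real.pi : ℂ)) ^ (1 / 2 - z - 1) * (2 * (Real.pi : ℂ)) ^ (z - 1) := by
    rw [← Complex.cpow_add _ _ (by simp [hpi])]; congr 1; ring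
  unfold Gamma1 S0
  rw [e1, e2, e4, e5, hc]
  generalize Complex.Gamma (1 / 2 - z) = A at g1 ⊢
  generalize Complex.Gamma (1 / 2 + z) = B
  field_simp

/-- Gamma-product identity for the residue constant with S-matrix factors:
for even `n ≥ 2` and `γ − β_j ∉ πi·ℤ`,
`(2πi)^{−(n−2)}·∏_j [e^{(γ+πi−β_j)/2}·Γ((γ−β_j+3πi)/(2πi))·Γ((γ−β_j+2πi)/(−2πi))]
    ·∏_j (γ−β_j+2πi)/(γ−β_j+πi)
 = (−1)^{n/2−1}·(−2π)^{n/2−1}·e^{(1/2)∑_j(γ−β_j)}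
    ·∏_j [Γ₁(−i(β_j−γ)+π)·Γ₁(i(β_j−γ))]·∏_j S₀(γ−β_j)`. -/
theorem gamma_product_Un_smatrix (n : ℕ) (hn : Even n) (h2 : 2 ≤ n)
    (γ : ℂ) (β : Fin (n - 2) → ℂ)
    (h : ∀ j (k : ℤ), γ - β j ≠ (k : ℂ) * (Real.pi * Complex.I)) :
    (2 * Real.pi * Complex.I) ^ (-((n : ℤ) - 2)) *
        (∏ j, (Complex.exp ((γ + Real.pi * Complex.I - β j) / 2) *
          Complex.Gamma ((γ - β j + 3 * Real.pi * Complex.I) / (2 * Real.pi * Complex.I)) *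
          Complex.Gamma ((γ - β j + 2 * Real.pi * Complex.I) / (-(2 * Real.pi * Complex.I))))) *
        ∏ j, ((γ - β j + 2 * Real.pi * Complex.I) / (γ - β j + Real.pi * Complex.I)) =
      (-1 : ℂ) ^ (n / 2 - 1) * (-2 * Real.pi : ℂ) ^ (n / 2 - 1) *
        Complex.exp ((1 / 2) * ∑ j, (γ - β j)) *
        (∏ j, (Gamma1 (-Complex.I * (β j - γ) + Real.pi) *
          Gamma1 (Complex.I * (β j - γ)))) *
        ∏ j, S0 (γ - β j) := by
  have hpi : (Real.pi : ℂ) ≠ 0 := by exact_mod_cast Real.pi_ne_zero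
  have hI := Complex.I_ne_zero
  obtain ⟨m, rfl⟩ : ∃ m, n = 2 * m + 2 := by
    obtain ⟨k, hk⟩ := hn
    exact ⟨k - 1, by omega⟩
  have hm : (2 * m + 2) / 2 - 1 = m := by omega
  have hz : (-(((2 * m + 2 : ℕ) : ℤ) - 2)) = -((2 * m : ℕ) : ℤ) := by push_cast; ring
  have hcard : 2 * m + 2 - 2 = 2 * m := by omega
  rw [hm, hz, zpow_neg, zpow_natCast, mul_assoc, ← Finset.prod_mul_distrib, mul_assoc _ (∏ j, _),
    ← Finset.prod_mul_distrib, Finset.mul_sum, Complex.exp_sum]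
  have hL : ∀ j, Complex.exp ((γ + Real.pi * Complex.I - β j) / 2) *
      Complex.Gamma ((γ - β j + 3 * Real.pi * Complex.I) / (2 * Real.pi * Complex.I)) *
      Complex.Gamma ((γ - β j + 2 * Real.pi * Complex.I) / (-(2 * Real.pi * Complex.I))) *
      ((γ - β j + 2 * Real.pi * Complex.I) / (γ - β j + Real.pi * Complex.I)) =
    -Complex.I * (Complex.exp (1 / 2 * (γ - β j)) *
      (Complex.Gamma (1/2 + (γ - β j) / (2 * Real.pi * Complex.I)) *
       Complex.Gamma (-(γ - β j) / (2 * Real.pi * Complex.I)))) := by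
    intro j
    rw [show γ + Real.pi * Complex.I - β j = (γ - β j) + Real.pi * Complex.I by ring]
    exact aux_left (γ - β j) (h j)
  rw [Finset.prod_congr rfl (fun j _ => hL j)]
  rw [mul_assoc (_ * _) (∏ j, _), ← Finset.prod_mul_distrib]
  have hR : ∀ j, Complex.exp (1 / 2 * (γ - β j)) *
      (Gamma1 (-Complex.I * (β j - γ) + Real.pi) * Gamma1 (Complex.I * (β j - γ)) *
        S0 (γ - β j)) = (2 * (Real.pi : ℂ)) ^ (-3 / 2 : ℂ) * (Complex.exp (1 / 2 * (γ - β j)) *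
      (Complex.Gamma (1/2 + (γ - β j) / (2 * Real.pi * Complex.I)) *
       Complex.Gamma (-(γ - β j) / (2 * Real.pi * Complex.I)))) := by
    intro j
    rw [show -Complex.I * (β j - γ) = Complex.I * (γ - β j) by ring,
      show Complex.I * (β j - γ) = -Complex.I * (γ - β j) by ring, aux_right _ (h j)]
    ring
  rw [Finset.prod_congr rfl (fun j _ => hR j), Finset.prod_mul_distrib (f := fun _ => -Complex.I),
    Finset.prod_mul_distrib (f := fun _ => (2 * (Real.pi : ℂ)) ^ (-3 / 2 : ℂ)),
    Finset.prod_const, Finset.prod_const, Finset.card_univ, Fintype.card_fin,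
    ← mul_assoc, ← mul_assoc]
  congr 1
  have hc : ((2 * (Real.pi : ℂ)) ^ (-3 / 2 : ℂ)) ^ 2 = ((2 * (Real.pi : ℂ)) ^ 3)⁻¹ := by
    rw [← Complex.cpow_nat_mul, show ((2 : ℕ) : ℂ) * (-3 / 2) = -((3 : ℕ) : ℂ) by push_cast; ring,
      Complex.cpow_neg, Complex.cpow_natCast]
  rw [hcard, pow_mul, pow_mul, pow_mul, hc, ← inv_pow, ← mul_pow, ← mul_pow, ← mul_pow]
  congr 1
  have := Complex.I_sq
  rw [mul_pow _ Complex.I, neg_sq, this]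
  field_simp
end
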